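/- For every MTL sentence φ (over atomic propositions identified with nullary fluents): φ is valid in MTL (pointwise semantics over timed words) if and only if φ is valid as a trace formula in t-ESG (i.e., w, ⟨⟩, τ ⊨ φ for every t-ESG world w and every trace τ). -/

import Mathlib

namespace TESG

/-! ### Sorts, standard names, symbols -/

inductive Sort3 : Type
  | obj | act | clk
  deriving DecidableEq

/-- A standard name: a sort together with a numeric identifier
(there are countably infinitely many standard names of each sort). -/
structure Name : Type where
  sort : Sort3
  id : ℕ
  deriving DecidableEq

/-- A function symbol (with a result sort and a fluent/rigid flag). -/
structure FuncSym : Type where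
  id : ℕ
  sort : Sort3
  fluent : Bool
  deriving DecidableEq

/-- Predicate symbols: the distinguished fluents `poss`, `reset` and the
clock-constraint predicate `gc`, plus ordinary fluent (`fl`) and rigid (`rg`)
predicate symbols. -/
inductive PredSym : Type
  | poss | reset | gc
  | fl (id : ℕ)
  | rg (id : ℕ)
  deriving DecidableEq

def PredSym.isFluent : PredSym → Bool
  | .rg _ => false
  | _ => true

inductive CmpOp : Type
  | lt | le | eq | ge | gt
  deriving DecidableEq

def CmpOp.holds : CmpOp → ℝ → ℝ → Prop
  | .lt, a, b => a < b
  | .le, a, b => a ≤ b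
  | .eq, a, b => a = b
  | .ge, a, b => b ≤ a
  | .gt, a, b => b < a

/-- Open, closed or half-closed intervals with natural number endpoints
(`hi = none` means `∞`). -/
structure Ival : Type where
  lo : ℕ
  hi : Option ℕ
  loOpen : Bool
  hiOpen : Bool
  deriving DecidableEq

def Ival.memR (I : Ival) (x : ℝ) : Prop :=
  (if I.loOpen then (I.lo : ℝ) < x else (I.lo : ℝ) ≤ x) ∧
  (match I.hi with
   | none => True
   | some h => if I.hiOpen then x < (h : ℝ) else x ≤ (h : ℝ))

def Ival.unbounded : Ival := ⟨0, none, false, false⟩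

/-! ### Terms -/

mutual
  inductive Term : Type
    | name (n : Name)
    | app (f : FuncSym) (args : ArgList)
  inductive ArgList : Type
    | nil
    | cons (t : Term) (ts : ArgList)
end

def ArgList.ofNames : List Name → ArgList
  | [] => .nil
  | n :: ns => .cons (.name n) (ArgList.ofNames ns)

/-! ### Formulas (situation formulas, trace formulas) and Golog programs.
Quantification is understood substitutionally over standard names and is
represented by binding a standard name (higher-order abstract syntax). -/

mutual
  inductive SitForm : Type
    | pred (P : PredSym) (args : ArgList)
    | eq (t₁ t₂ : Term)
    | clockCmp (c : Term) (op : CmpOp) (r : ℚ)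
    | constCmp (r : ℚ) (op : CmpOp) (r' : ℚ)
    | and (α β : SitForm)
    | not (α : SitForm)
    | all (s : Sort3) (body : Name → SitForm)
    | box (α : SitForm)
    | after (δ : Prog) (α : SitForm)
    | during (δ : Prog) (φ : TraceForm)
    | duringFin (δ : Prog) (φ : TraceForm)
  inductive TraceForm : Type
    | base (α : SitForm)
    | and (φ ψ : TraceForm)
    | not (φ : TraceForm)
    | all (s : Sort3) (body : Name → TraceForm)
    | untl (I : Ival) (φ ψ : TraceForm)
  inductive Prog : Type
    | act (t : Term)
    | test (α : SitForm)
    | seq (δ₁ δ₂ : Prog)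
    | choice (δ₁ δ₂ : Prog)
    | conc (δ₁ δ₂ : Prog)
    | star (δ : Prog)
end

def SitForm.orS (α β : SitForm) : SitForm := .not (.and (.not α) (.not β))
def SitForm.impS (α β : SitForm) : SitForm := .not (.and α (.not β))
def SitForm.iffS (α β : SitForm) : SitForm := .and (α.impS β) (β.impS α)
def trueSit : SitForm := .all .obj fun n => .eq (.name n) (.name n)
def falseSit : SitForm := .not trueSit
def nilProg : Prog := .test trueSit

/-! ### Timed traces.
A finite timed trace is a list of (time point, action standard name) pairs. -/

abbrev FinTrace := List (ℝ × ℕ)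

def lastTime (z : FinTrace) : ℝ := ((z.getLast?).map Prod.fst).getD 0

def TraceWFFrom (t₀ : ℝ) (z : FinTrace) : Prop :=
  List.Chain' (· ≤ ·) (t₀ :: z.map Prod.fst)

def TraceWF : FinTrace → Prop := TraceWFFrom 0

def untimed (z : FinTrace) : List ℕ := z.map Prod.snd

/-! ### Worlds -/

structure World : Type where
  fval : FuncSym → List Name → FinTrace → Name
  pval : PredSym → List Name → FinTrace → Bool
  cval : ℕ → FinTrace → ℝ
  fval_sort : ∀ f args z, (fval f args z).sort = f.sort
  rigid_fun : ∀ f : FuncSym, f.fluent = false → ∀ args z z', fval f args z = fval f args z'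
  rigid_pred : ∀ P : PredSym, P.isFluent = false → ∀ args z z', pval P args z = pval P args z'
  unique_names : ∀ f f' args args' z z', f.sort ≠ Sort3.obj → f'.sort ≠ Sort3.obj →
      (f, args) ≠ (f', args') → fval f args z ≠ fval f' args' z'
  clock_init : ∀ c, cval c [] = 0
  clock_prog : ∀ c z t p, TraceWF (z ++ [(t, p)]) →
      cval c (z ++ [(t, p)]) =
        (if pval PredSym.reset [Name.mk Sort3.clk c] (z ++ [(t, p)]) = true then 0
         else cval c z + (t - lastTime z))

/-! ### Denotation of ground terms -/

mutual
  def denot (w : World) (z : FinTrace) : Term → Name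
    | .name n => n
    | .app f args => w.fval f (denotArgs w z args) z
  def denotArgs (w : World) (z : FinTrace) : ArgList → List Name
    | .nil => []
    | .cons t ts => denot w z t :: denotArgs w z ts
end

/-! ### Truth of static situation formulas at a time-extended trace `z · t`
(fluent values are observed at action occurrences, i.e. at `z`; clock values
are advanced to the time point `t`). -/

def cvalAt (w : World) (z : FinTrace) (t : ℝ) (c : ℕ) : ℝ :=
  w.cval c z + (t - lastTime z)

def StaticSatT (w : World) (z : FinTrace) (t : ℝ) : SitForm → Prop
  | .pred P args => w.pval P (denotArgs w z args) z = true
  | .eq t₁ t₂ => denot w z t₁ = denot w z t₂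
  | .clockCmp c op r =>
      (denot w z c).sort = Sort3.clk ∧ op.holds (cvalAt w z t (denot w z c).id) (r : ℝ)
  | .constCmp r op r' => op.holds (r : ℝ) (r' : ℝ)
  | .and α β => StaticSatT w z t α ∧ StaticSatT w z t β
  | .not α => ¬ StaticSatT w z t α
  | .all s body => ∀ k : ℕ, StaticSatT w z t (body (Name.mk s k))
  | .box _ => False
  | .after _ _ => False
  | .during _ _ => False
  | .duringFin _ _ => False

/-! ### Program transition semantics -/

/-- Final configurations (`t` is the pending time point of the configuration). -/
inductive Final (w : World) (z : FinTrace) (t : ℝ) : Prog → Prop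
  | test {α} : StaticSatT w z t α → Final w z t (.test α)
  | seq {δ₁ δ₂} : Final w z t δ₁ → Final w z t δ₂ → Final w z t (.seq δ₁ δ₂)
  | choiceL {δ₁ δ₂} : Final w z t δ₁ → Final w z t (.choice δ₁ δ₂)
  | choiceR {δ₁ δ₂} : Final w z t δ₂ → Final w z t (.choice δ₁ δ₂)
  | star {δ} : Final w z t (.star δ)
  | conc {δ₁ δ₂} : Final w z t δ₁ → Final w z t δ₂ → Final w z t (.conc δ₁ δ₂)

/-- Action step of the transition semantics, taken at the time point `t`. -/
inductive TransA (w : World) (z : FinTrace) (t : ℝ) : Prog → FinTrace → Prog → Prop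
  | act {a : Term} (h : (denot w z a).sort = Sort3.act) :
      TransA w z t (.act a) (z ++ [(t, (denot w z a).id)]) nilProg
  | seqL {δ₁ δ₂ γ z'} : TransA w z t δ₁ z' γ → TransA w z t (.seq δ₁ δ₂) z' (.seq γ δ₂)
  | seqR {δ₁ δ₂ δ' z'} : Final w z t δ₁ → TransA w z t δ₂ z' δ' → TransA w z t (.seq δ₁ δ₂) z' δ'
  | choiceL {δ₁ δ₂ δ' z'} : TransA w z t δ₁ z' δ' → TransA w z t (.choice δ₁ δ₂) z' δ'
  | choiceR {δ₁ δ₂ δ' z'} : TransA w z t δ₂ z' δ' → TransA w z t (.choice δ₁ δ₂) z' δ'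
  | star {δ γ z'} : TransA w z t δ z' γ → TransA w z t (.star δ) z' (.seq γ (.star δ))
  | concL {δ₁ δ₂ δ' z'} : TransA w z t δ₁ z' δ' → TransA w z t (.conc δ₁ δ₂) z' (.conc δ' δ₂)
  | concR {δ₁ δ₂ δ' z'} : TransA w z t δ₂ z' δ' → TransA w z t (.conc δ₁ δ₂) z' (.conc δ₁ δ')

abbrev Config := FinTrace × Prog

/-- A transition: a time step (to some time point `t` not before the current
time) followed by an action step. -/
def Trans (w : World) (c c' : Config) : Prop :=
  ∃ t : ℝ, lastTime c.1 ≤ t ∧ TransA w c.1 t c.2 c'.1 c'.2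

def FinalC (w : World) (c : Config) : Prop := Final w c.1 (lastTime c.1) c.2

def TransStar (w : World) : Config → Config → Prop :=
  Relation.ReflTransGen (Trans w)

/-! ### Possibly infinite timed traces and program traces -/

inductive TTrace : Type
  | fin (z : FinTrace)
  | inf (π : ℕ → ℝ × ℕ)

def prefixTr (π : ℕ → ℝ × ℕ) (n : ℕ) : FinTrace := (List.range n).map π

def TTrace.len : TTrace → ℕ∞
  | .fin z => (z.length : ℕ∞)
  | .inf _ => ⊤

def TTrace.takeFin : TTrace → ℕ → FinTrace
  | .fin z, n => z.take n
  | .inf π, n => prefixTr π n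

def TTrace.drop : TTrace → ℕ → TTrace
  | .fin z, n => .fin (z.drop n)
  | .inf π, n => .inf (fun i => π (i + n))

def TTrace.WF : TTrace → Prop
  | .fin z => TraceWF z
  | .inf π => (∀ i, 0 ≤ (π i).1) ∧ ∀ i j, i ≤ j → (π i).1 ≤ (π j).1

/-- The program traces `‖δ‖ᶻ_w` of a program `δ` starting after the finite
trace `z` in world `w`: the finite traces leading to a final configuration and
the infinite traces of runs that never reach a final configuration. -/
def ProgTrace (w : World) (z : FinTrace) (δ : Prog) : TTrace → Prop
  | .fin z' => ∃ δ', TransStar w (z, δ) (z ++ z', δ') ∧ FinalC w (z ++ z', δ')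
  | .inf π => ∃ ρ : ℕ → Prog, ρ 0 = δ ∧
      (∀ i, Trans w (z ++ prefixTr π i, ρ i) (z ++ prefixTr π (i + 1), ρ (i + 1))) ∧
      (∀ i, ¬ FinalC w (z ++ prefixTr π (i + 1), ρ (i + 1)))

/-! ### Truth of formulas -/

mutual
  def SatS : World → FinTrace → SitForm → Prop
    | w, z, .pred P args => w.pval P (denotArgs w z args) z = true
    | w, z, .eq t₁ t₂ => denot w z t₁ = denot w z t₂
    | w, z, .clockCmp c op r =>
        (denot w z c).sort = Sort3.clk ∧ op.holds (w.cval (denot w z c).id z) (r : ℝ)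
    | _, _, .constCmp r op r' => op.holds (r : ℝ) (r' : ℝ)
    | w, z, .and α β => SatS w z α ∧ SatS w z β
    | w, z, .not α => ¬ SatS w z α
    | w, z, .all s body => ∀ k : ℕ, SatS w z (body (Name.mk s k))
    | w, z, .box α => ∀ z' : FinTrace, TraceWFFrom (lastTime z) z' → SatS w (z ++ z') α
    | w, z, .after δ α => ∀ z' : FinTrace, ProgTrace w z δ (.fin z') → SatS w (z ++ z') α
    | w, z, .during δ φ => ∀ τ : TTrace, ProgTrace w z δ τ → SatT w z τ φ
    | w, z, .duringFin δ φ =>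
        ∀ z' : FinTrace, ProgTrace w z δ (.fin z') → SatT w z (.fin z') φ
  def SatT : World → FinTrace → TTrace → TraceForm → Prop
    | w, z, _, .base α => SatS w z α
    | w, z, τ, .and φ ψ => SatT w z τ φ ∧ SatT w z τ ψ
    | w, z, τ, .not φ => ¬ SatT w z τ φ
    | w, z, τ, .all s body => ∀ k : ℕ, SatT w z τ (body (Name.mk s k))
    | w, z, τ, .untl I φ ψ =>
        ∃ k : ℕ, 1 ≤ k ∧ (k : ℕ∞) ≤ τ.len ∧
          SatT w (z ++ τ.takeFin k) (τ.drop k) ψ ∧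
          I.memR (lastTime (z ++ τ.takeFin k) - lastTime z) ∧
          ∀ m : ℕ, 1 ≤ m → m < k → SatT w (z ++ τ.takeFin m) (τ.drop m) φ
end

/-- `w ⊨ α` -/
def Sat0 (w : World) (α : SitForm) : Prop := SatS w [] α

/-- Validity in t-ESG. -/
def TESGValid (α : SitForm) : Prop := ∀ w : World, Sat0 w α

def SatAll (w : World) (Γ : Set SitForm) : Prop := ∀ α ∈ Γ, Sat0 w α

/-- Entailment in t-ESG. -/
def Entails (Γ : Set SitForm) (α : SitForm) : Prop :=
  ∀ w : World, SatAll w Γ → Sat0 w α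
/-! ### Syntactic classes of terms and formulas -/

mutual
  /-- A term mentioning no clock terms (in particular it is of sort object or
  action, as are all of its subterms). -/
  def Term.noClk : Term → Prop
    | .name n => n.sort ≠ Sort3.clk
    | .app f args => f.sort ≠ Sort3.clk ∧ ArgList.noClk args
  def ArgList.noClk : ArgList → Prop
    | .nil => True
    | .cons t ts => Term.noClk t ∧ ArgList.noClk ts
end

/-- Static situation formulas: no `[·]`, `⟦·⟧` or `□` operators. -/
def SitForm.IsStatic : SitForm → Prop
  | .pred _ _ => True
  | .eq _ _ => True
  | .clockCmp _ _ _ => True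
  | .constCmp _ _ _ => True
  | .and α β => α.IsStatic ∧ β.IsStatic
  | .not α => α.IsStatic
  | .all _ body => ∀ n : Name, (body n).IsStatic
  | .box _ => False
  | .after _ _ => False
  | .during _ _ => False
  | .duringFin _ _ => False

/-- Fluent situation formulas: static, time-invariant (no clock terms, no
mention of the clock-constraint predicate `gc`) and no mention of `poss`. -/
def SitForm.IsFluentF : SitForm → Prop
  | .pred P args => P ≠ PredSym.poss ∧ P ≠ PredSym.gc ∧ ArgList.noClk args
  | .eq t₁ t₂ => Term.noClk t₁ ∧ Term.noClk t₂
  | .clockCmp _ _ _ => False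
  | .constCmp _ _ _ => True
  | .and α β => α.IsFluentF ∧ β.IsFluentF
  | .not α => α.IsFluentF
  | .all s body => s ≠ Sort3.clk ∧ ∀ n : Name, (body n).IsFluentF
  | .box _ => False
  | .after _ _ => False
  | .during _ _ => False
  | .duringFin _ _ => False

/-- Static situation formulas that do not mention `poss`. -/
def SitForm.IsStaticNoPoss : SitForm → Prop
  | .pred P _ => P ≠ PredSym.poss
  | .eq _ _ => True
  | .clockCmp _ _ _ => True
  | .constCmp _ _ _ => True
  | .and α β => α.IsStaticNoPoss ∧ β.IsStaticNoPoss
  | .not α => α.IsStaticNoPoss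
  | .all _ body => ∀ n : Name, (body n).IsStaticNoPoss
  | .box _ => False
  | .after _ _ => False
  | .during _ _ => False
  | .duringFin _ _ => False

/-- Time-invariant (static) situation formulas: no clock terms and no mention
of the clock-constraint predicate `gc`. -/
def SitForm.IsTimeInvS : SitForm → Prop
  | .pred P args => P ≠ PredSym.gc ∧ ArgList.noClk args
  | .eq t₁ t₂ => Term.noClk t₁ ∧ Term.noClk t₂
  | .clockCmp _ _ _ => False
  | .constCmp _ _ _ => True
  | .and α β => α.IsTimeInvS ∧ β.IsTimeInvS
  | .not α => α.IsTimeInvS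
  | .all s body => s ≠ Sort3.clk ∧ ∀ n : Name, (body n).IsTimeInvS
  | .box _ => False
  | .after _ _ => False
  | .during _ _ => False
  | .duringFin _ _ => False

/-! ### Formulas over a pair `(F, C)` of fluents and clocks -/

mutual
  def Term.Over (Fn : Set FuncSym) (C : Set ℕ) : Term → Prop
    | .name n => n.sort = Sort3.clk → n.id ∈ C
    | .app f args => (f.fluent = true → f ∈ Fn) ∧ ArgList.Over Fn C args
  def ArgList.Over (Fn : Set FuncSym) (C : Set ℕ) : ArgList → Prop
    | .nil => True
    | .cons t ts => Term.Over Fn C t ∧ ArgList.Over Fn C ts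
end

mutual
  /-- Situation formulas over `(F, C)`: mentioning only (relational) fluents
  from `R`, functional fluents from `Fn` and clocks from `C` (the distinguished
  predicates `poss`, `gc` are determined by a BAT and are allowed as well). -/
  def OverS (R : Set PredSym) (Fn : Set FuncSym) (C : Set ℕ) : SitForm → Prop
    | .pred P args =>
        (P.isFluent = true → P = PredSym.poss ∨ P = PredSym.gc ∨ P ∈ R) ∧
        ArgList.Over Fn C args
    | .eq t₁ t₂ => Term.Over Fn C t₁ ∧ Term.Over Fn C t₂
    | .clockCmp c _ _ => Term.Over Fn C c
    | .constCmp _ _ _ => True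
    | .and α β => OverS R Fn C α ∧ OverS R Fn C β
    | .not α => OverS R Fn C α
    | .all s body => ∀ k : ℕ,
        OverS R Fn (C ∪ (if s = Sort3.clk then {k} else ∅)) (body (Name.mk s k))
    | .box α => OverS R Fn C α
    | .after δ α => OverP R Fn C δ ∧ OverS R Fn C α
    | .during δ φ => OverP R Fn C δ ∧ OverT R Fn C φ
    | .duringFin δ φ => OverP R Fn C δ ∧ OverT R Fn C φ
  def OverT (R : Set PredSym) (Fn : Set FuncSym) (C : Set ℕ) : TraceForm → Prop
    | .base α => OverS R Fn C α
    | .and φ ψ => OverT R Fn C φ ∧ OverT R Fn C ψ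
    | .not φ => OverT R Fn C φ
    | .all s body => ∀ k : ℕ,
        OverT R Fn (C ∪ (if s = Sort3.clk then {k} else ∅)) (body (Name.mk s k))
    | .untl _ φ ψ => OverT R Fn C φ ∧ OverT R Fn C ψ
  def OverP (R : Set PredSym) (Fn : Set FuncSym) (C : Set ℕ) : Prog → Prop
    | .act t => Term.Over Fn C t
    | .test α => OverS R Fn C α
    | .seq δ₁ δ₂ => OverP R Fn C δ₁ ∧ OverP R Fn C δ₂
    | .choice δ₁ δ₂ => OverP R Fn C δ₁ ∧ OverP R Fn C δ₂
    | .conc δ₁ δ₂ => OverP R Fn C δ₁ ∧ OverP R Fn C δ₂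
    | .star δ => OverP R Fn C δ
end

/-! ### The ESG fragment: no clocks, no `reset`/`gc`, only unbounded until -/

mutual
  def IsESGS : SitForm → Prop
    | .pred P args => P ≠ PredSym.reset ∧ P ≠ PredSym.gc ∧ ArgList.noClk args
    | .eq t₁ t₂ => Term.noClk t₁ ∧ Term.noClk t₂
    | .clockCmp _ _ _ => False
    | .constCmp _ _ _ => False
    | .and α β => IsESGS α ∧ IsESGS β
    | .not α => IsESGS α
    | .all s body => s ≠ Sort3.clk ∧ ∀ n : Name, IsESGS (body n)
    | .box α => IsESGS α
    | .after δ α => IsESGP δ ∧ IsESGS α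
    | .during δ φ => IsESGP δ ∧ IsESGT φ
    | .duringFin δ φ => IsESGP δ ∧ IsESGT φ
  def IsESGT : TraceForm → Prop
    | .base α => IsESGS α
    | .and φ ψ => IsESGT φ ∧ IsESGT ψ
    | .not φ => IsESGT φ
    | .all s body => s ≠ Sort3.clk ∧ ∀ n : Name, IsESGT (body n)
    | .untl I φ ψ => I = Ival.unbounded ∧ IsESGT φ ∧ IsESGT ψ
  def IsESGP : Prog → Prop
    | .act t => Term.noClk t
    | .test α => α.IsStatic ∧ IsESGS α
    | .seq δ₁ δ₂ => IsESGP δ₁ ∧ IsESGP δ₂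
    | .choice δ₁ δ₂ => IsESGP δ₁ ∧ IsESGP δ₂
    | .conc δ₁ δ₂ => IsESGP δ₁ ∧ IsESGP δ₂
    | .star δ => IsESGP δ
end
/-! ### The logic ESG: untimed traces and worlds -/

abbrev ETrace := List ℕ

structure EWorld : Type where
  fval : FuncSym → List Name → ETrace → Name
  pval : PredSym → List Name → ETrace → Bool
  fval_sort : ∀ f args z, (fval f args z).sort = f.sort
  rigid_fun : ∀ f : FuncSym, f.fluent = false → ∀ args z z', fval f args z = fval f args z'
  rigid_pred : ∀ P : PredSym, P.isFluent = false → ∀ args z z', pval P args z = pval P args z'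
  unique_names : ∀ f f' args args' z z', f.sort = Sort3.act → f'.sort = Sort3.act →
      (f, args) ≠ (f', args') → fval f args z ≠ fval f' args' z'

mutual
  def edenot (e : EWorld) (z : ETrace) : Term → Name
    | .name n => n
    | .app f args => e.fval f (edenotArgs e z args) z
  def edenotArgs (e : EWorld) (z : ETrace) : ArgList → List Name
    | .nil => []
    | .cons t ts => edenot e z t :: edenotArgs e z ts
end

def EStaticSat (e : EWorld) (z : ETrace) : SitForm → Prop
  | .pred P args => e.pval P (edenotArgs e z args) z = true
  | .eq t₁ t₂ => edenot e z t₁ = edenot e z t₂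
  | .clockCmp _ _ _ => False
  | .constCmp _ _ _ => False
  | .and α β => EStaticSat e z α ∧ EStaticSat e z β
  | .not α => ¬ EStaticSat e z α
  | .all s body => ∀ k : ℕ, EStaticSat e z (body (Name.mk s k))
  | .box _ => False
  | .after _ _ => False
  | .during _ _ => False
  | .duringFin _ _ => False

inductive EFinal (e : EWorld) (z : ETrace) : Prog → Prop
  | test {α} : EStaticSat e z α → EFinal e z (.test α)
  | seq {δ₁ δ₂} : EFinal e z δ₁ → EFinal e z δ₂ → EFinal e z (.seq δ₁ δ₂)
  | choiceL {δ₁ δ₂} : EFinal e z δ₁ → EFinal e z (.choice δ₁ δ₂)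
  | choiceR {δ₁ δ₂} : EFinal e z δ₂ → EFinal e z (.choice δ₁ δ₂)
  | star {δ} : EFinal e z (.star δ)
  | conc {δ₁ δ₂} : EFinal e z δ₁ → EFinal e z δ₂ → EFinal e z (.conc δ₁ δ₂)

inductive ETransA (e : EWorld) (z : ETrace) : Prog → ETrace → Prog → Prop
  | act {a : Term} (h : (edenot e z a).sort = Sort3.act) :
      ETransA e z (.act a) (z ++ [(edenot e z a).id]) nilProg
  | seqL {δ₁ δ₂ γ z'} : ETransA e z δ₁ z' γ → ETransA e z (.seq δ₁ δ₂) z' (.seq γ δ₂)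
  | seqR {δ₁ δ₂ δ' z'} : EFinal e z δ₁ → ETransA e z δ₂ z' δ' → ETransA e z (.seq δ₁ δ₂) z' δ'
  | choiceL {δ₁ δ₂ δ' z'} : ETransA e z δ₁ z' δ' → ETransA e z (.choice δ₁ δ₂) z' δ'
  | choiceR {δ₁ δ₂ δ' z'} : ETransA e z δ₂ z' δ' → ETransA e z (.choice δ₁ δ₂) z' δ'
  | star {δ γ z'} : ETransA e z δ z' γ → ETransA e z (.star δ) z' (.seq γ (.star δ))
  | concL {δ₁ δ₂ δ' z'} : ETransA e z δ₁ z' δ' → ETransA e z (.conc δ₁ δ₂) z' (.conc δ' δ₂)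
  | concR {δ₁ δ₂ δ' z'} : ETransA e z δ₂ z' δ' → ETransA e z (.conc δ₁ δ₂) z' (.conc δ₁ δ')

abbrev EConfig := ETrace × Prog

def ETrans (e : EWorld) (c c' : EConfig) : Prop := ETransA e c.1 c.2 c'.1 c'.2

def EFinalC (e : EWorld) (c : EConfig) : Prop := EFinal e c.1 c.2

def ETransStar (e : EWorld) : EConfig → EConfig → Prop :=
  Relation.ReflTransGen (ETrans e)

inductive ETTrace : Type
  | fin (z : ETrace)
  | inf (π : ℕ → ℕ)

def eprefixTr (π : ℕ → ℕ) (n : ℕ) : ETrace := (List.range n).map π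

def ETTrace.len : ETTrace → ℕ∞
  | .fin z => (z.length : ℕ∞)
  | .inf _ => ⊤

def ETTrace.takeFin : ETTrace → ℕ → ETrace
  | .fin z, n => z.take n
  | .inf π, n => eprefixTr π n

def ETTrace.drop : ETTrace → ℕ → ETTrace
  | .fin z, n => .fin (z.drop n)
  | .inf π, n => .inf (fun i => π (i + n))

def EProgTrace (e : EWorld) (z : ETrace) (δ : Prog) : ETTrace → Prop
  | .fin z' => ∃ δ', ETransStar e (z, δ) (z ++ z', δ') ∧ EFinalC e (z ++ z', δ')
  | .inf π => ∃ ρ : ℕ → Prog, ρ 0 = δ ∧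
      (∀ i, ETrans e (z ++ eprefixTr π i, ρ i) (z ++ eprefixTr π (i + 1), ρ (i + 1))) ∧
      (∀ i, ¬ EFinalC e (z ++ eprefixTr π (i + 1), ρ (i + 1)))

mutual
  def ESatS : EWorld → ETrace → SitForm → Prop
    | e, z, .pred P args => e.pval P (edenotArgs e z args) z = true
    | e, z, .eq t₁ t₂ => edenot e z t₁ = edenot e z t₂
    | _, _, .clockCmp _ _ _ => False
    | _, _, .constCmp _ _ _ => False
    | e, z, .and α β => ESatS e z α ∧ ESatS e z β
    | e, z, .not α => ¬ ESatS e z α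
    | e, z, .all s body => ∀ k : ℕ, ESatS e z (body (Name.mk s k))
    | e, z, .box α => ∀ z' : ETrace, ESatS e (z ++ z') α
    | e, z, .after δ α => ∀ z' : ETrace, EProgTrace e z δ (.fin z') → ESatS e (z ++ z') α
    | e, z, .during δ φ => ∀ τ : ETTrace, EProgTrace e z δ τ → ESatT e z τ φ
    | e, z, .duringFin δ φ =>
        ∀ z' : ETrace, EProgTrace e z δ (.fin z') → ESatT e z (.fin z') φ
  def ESatT : EWorld → ETrace → ETTrace → TraceForm → Prop
    | e, z, _, .base α => ESatS e z α
    | e, z, τ, .and φ ψ => ESatT e z τ φ ∧ ESatT e z τ ψ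
    | e, z, τ, .not φ => ¬ ESatT e z τ φ
    | e, z, τ, .all s body => ∀ k : ℕ, ESatT e z τ (body (Name.mk s k))
    | e, z, τ, .untl _ φ ψ =>
        ∃ k : ℕ, 1 ≤ k ∧ (k : ℕ∞) ≤ τ.len ∧
          ESatT e (z ++ τ.takeFin k) (τ.drop k) ψ ∧
          ∀ m : ℕ, 1 ≤ m → m < k → ESatT e (z ++ τ.takeFin m) (τ.drop m) φ
end

/-- `w ⊨_ESG α` -/
def ESat0 (e : EWorld) (α : SitForm) : Prop := ESatS e [] α

/-- Validity in ESG. -/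
def ESGValid (α : SitForm) : Prop := ∀ e : EWorld, ESat0 e α

def ESatAll (e : EWorld) (Γ : Set SitForm) : Prop := ∀ α ∈ Γ, ESat0 e α

/-- Entailment in ESG. -/
def EEntails (Γ : Set SitForm) (α : SitForm) : Prop :=
  ∀ e : EWorld, ESatAll e Γ → ESat0 e α

/-- The time-extended t-ESG world corresponding to an ESG world: it agrees
with the ESG world on every primitive term and primitive formula after every
timed trace, via the corresponding symbolic (untimed) trace. -/
def IsTimeExt (e : EWorld) (w : World) : Prop :=
  (∀ f args z, w.fval f args z = e.fval f args (untimed z)) ∧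
  (∀ P args z, w.pval P args z = e.pval P args (untimed z))
/-! ### Basic action theories -/

/-- Universal quantification over a list of sorts (for the tuples `x⃗` in
successor state axioms). -/
def allNamesL : List Sort3 → (List Name → SitForm) → SitForm
  | [], body => body []
  | s :: ss, body => .all s fun x => allNamesL ss fun xs => body (x :: xs)

def unaryArgs (t : Term) : ArgList := .cons t .nil

/-- A basic action theory over a finite set of fluents (`Frel` relational,
`Ffun` functional) and a finite set of clocks `C`:
* `init` is the set `Σ₀` of sentences about the initial situation,
* `pre a` is the right-hand side `π_a` of the precondition axiom
  `□ Poss(a) ≡ π_a`,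
* `gcA a` is the right-hand side `g_a` of the clock-constraint axiom
  `□ g(a) ≡ g_a`,
* `ssaP P a x⃗` is the right-hand side `γ_F(x⃗)` of the successor state axiom
  `□ [a] F(x⃗) ≡ γ_F(x⃗)` of the relational fluent `P`,
* `ssaF f a x⃗ y` is the right-hand side `γ_f(x⃗, y)` of the successor state
  axiom `□ [a] f(x⃗) = y ≡ γ_f(x⃗, y)` of the functional fluent `f`. -/
structure BAT : Type where
  Frel : Finset PredSym
  Ffun : Finset FuncSym
  C : Finset ℕ
  argSorts : PredSym → List Sort3
  argSortsF : FuncSym → List Sort3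
  init : Set SitForm
  pre : Term → SitForm
  gcA : Term → SitForm
  ssaP : PredSym → Term → ArgList → SitForm
  ssaF : FuncSym → Term → ArgList → Term → SitForm

/-- The precondition axiom `□ ∀a. Poss(a) ≡ π_a`. -/
def BAT.preAx (B : BAT) : SitForm :=
  .box (.all .act fun a =>
    SitForm.iffS (.pred .poss (unaryArgs (.name a))) (B.pre (.name a)))

/-- The clock-constraint axiom `□ ∀a. g(a) ≡ g_a`. -/
def BAT.gcAx (B : BAT) : SitForm :=
  .box (.all .act fun a =>
    SitForm.iffS (.pred .gc (unaryArgs (.name a))) (B.gcA (.name a)))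

/-- The successor state axiom `□ ∀a ∀x⃗. [a] F(x⃗) ≡ γ_F(x⃗)`. -/
def BAT.ssaAxP (B : BAT) (P : PredSym) : SitForm :=
  .box (.all .act fun a => allNamesL (B.argSorts P) fun xs =>
    SitForm.iffS (.after (.act (.name a)) (.pred P (ArgList.ofNames xs)))
      (B.ssaP P (.name a) (ArgList.ofNames xs)))

/-- The successor state axiom `□ ∀a ∀x⃗ ∀y. [a] (f(x⃗) = y) ≡ γ_f(x⃗, y)`. -/
def BAT.ssaAxF (B : BAT) (f : FuncSym) : SitForm :=
  .box (.all .act fun a => allNamesL (B.argSortsF f) fun xs =>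
    .all f.sort fun y =>
      SitForm.iffS
        (.after (.act (.name a)) (.eq (.app f (ArgList.ofNames xs)) (.name y)))
        (B.ssaF f (.name a) (ArgList.ofNames xs) (.name y)))

/-- The sentences of the basic action theory:
`Σ = Σ₀ ∪ Σ_pre ∪ Σ_g ∪ Σ_post`. -/
def BAT.axioms (B : BAT) : Set SitForm :=
  B.init ∪ {B.preAx, B.gcAx} ∪
    (B.ssaAxP '' (↑B.Frel : Set PredSym)) ∪ (B.ssaAxF '' (↑B.Ffun : Set FuncSym))

/-- Well-formedness of a basic action theory: the fluents are fluent symbols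
(`Frel` contains the distinguished fluent `reset` but not `poss` or `gc`),
`Σ₀` consists of fluent sentences, `π_a` and all right-hand sides of successor
state axioms are fluent formulas, and `g_a` (as well as `γ_reset`, which
necessarily mentions clock terms) is a static formula not mentioning `poss`. -/
def BAT.WF (B : BAT) : Prop :=
  PredSym.reset ∈ B.Frel ∧ PredSym.poss ∉ B.Frel ∧ PredSym.gc ∉ B.Frel ∧
  (∀ P ∈ B.Frel, P.isFluent = true) ∧ (∀ f ∈ B.Ffun, f.fluent = true) ∧
  (∀ α ∈ B.init, α.IsFluentF) ∧
  (∀ t, (B.pre t).IsFluentF) ∧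
  (∀ t, (B.gcA t).IsStaticNoPoss) ∧
  (∀ P ∈ B.Frel, P ≠ PredSym.reset → ∀ a xs, (B.ssaP P a xs).IsFluentF) ∧
  (∀ a xs, (B.ssaP PredSym.reset a xs).IsStaticNoPoss) ∧
  (∀ f ∈ B.Ffun, ∀ a xs y, (B.ssaF f a xs y).IsFluentF)

/-- `w_Σ`: the world that is like `w` except that it satisfies the dynamics
prescribed by the basic action theory `B`:
* it agrees with `w` on all symbols outside the fluents of `B` (after every
  trace), and on all fluents of `B` initially;
* after an action, the values of the fluents of `B` are determined by their
  successor state axioms;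
* the truth of `Poss` and of the clock-constraint predicate `g` is determined
  by the precondition and clock-constraint axioms. -/
def IsWSigma (B : BAT) (w wS : World) : Prop :=
  (∀ f : FuncSym, f ∉ B.Ffun → ∀ args z, wS.fval f args z = w.fval f args z) ∧
  (∀ P : PredSym, P ∉ B.Frel → P ≠ PredSym.poss → P ≠ PredSym.gc →
      ∀ args z, wS.pval P args z = w.pval P args z) ∧
  (∀ f ∈ B.Ffun, ∀ args : List Name, wS.fval f args [] = w.fval f args []) ∧
  (∀ f ∈ B.Ffun, ∀ (args : List Name) (z : FinTrace) (t : ℝ) (p : ℕ) (n : Name),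
      (wS.fval f args (z ++ [(t, p)]) = n ↔
        SatS wS z (B.ssaF f (.name (Name.mk .act p)) (ArgList.ofNames args) (.name n)))) ∧
  (∀ P ∈ B.Frel, ∀ args : List Name, wS.pval P args [] = w.pval P args []) ∧
  (∀ P ∈ B.Frel, ∀ (args : List Name) (z : FinTrace) (t : ℝ) (p : ℕ),
      (wS.pval P args (z ++ [(t, p)]) = true ↔
        SatS wS z (B.ssaP P (.name (Name.mk .act p)) (ArgList.ofNames args)))) ∧
  (∀ (n : Name) (z : FinTrace),
      (wS.pval .poss [n] z = true ↔ SatS wS z (B.pre (.name n)))) ∧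
  (∀ (args : List Name) (z : FinTrace), args.length ≠ 1 →
      wS.pval .poss args z = w.pval .poss args z) ∧
  (∀ (n : Name) (z : FinTrace),
      (wS.pval .gc [n] z = true ↔ SatS wS z (B.gcA (.name n)))) ∧
  (∀ (args : List Name) (z : FinTrace), args.length ≠ 1 →
      wS.pval .gc args z = w.pval .gc args z)

/-! ### Complete information -/

/-- A basic action theory with complete information: the initial theory
decides every primitive formula over `(F, C)` and determines the value of
every functional fluent of `F`. -/
def CompleteInfo (B : BAT) : Prop :=
  (∀ (P : PredSym) (args : List Name),
      (P.isFluent = true → P ∈ B.Frel) →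
      (∀ n ∈ args, n.sort = Sort3.clk → n.id ∈ B.C) →
      Entails B.init (.pred P (ArgList.ofNames args)) ∨
        Entails B.init (.not (.pred P (ArgList.ofNames args)))) ∧
  (∀ f ∈ B.Ffun, ∀ args : List Name, ∃ n : Name,
      Entails B.init (.eq (.app f (ArgList.ofNames args)) (.name n)))
/-! ### Regression -/

/-- Rational timed traces (all time points rational). -/
abbrev RatTrace := List (ℚ × ℕ)

def ratToFin (z : RatTrace) : FinTrace := z.map fun q => ((q.1 : ℝ), q.2)

def lastTimeQ (z : RatTrace) : ℚ := ((z.getLast?).map Prod.fst).getD 0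

/-- Unfold the distinguished predicates `Poss` and `g` once, replacing them by
the right-hand sides of the precondition and clock-constraint axioms. -/
def unfoldPG (B : BAT) : SitForm → SitForm
  | .pred .poss (.cons t .nil) => B.pre t
  | .pred .gc (.cons t .nil) => B.gcA t
  | .pred P args => .pred P args
  | .eq t₁ t₂ => .eq t₁ t₂
  | .clockCmp c op r => .clockCmp c op r
  | .constCmp r op r' => .constCmp r op r'
  | .and α β => .and (unfoldPG B α) (unfoldPG B β)
  | .not α => .not (unfoldPG B α)
  | .all s body => .all s fun n => unfoldPG B (body n)
  | α => α

/-- One regression step through a time increment `d`: clock comparisons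
`c ⋈ r` become `c ⋈ (r - d)`. -/
def RstepT (d : ℚ) : SitForm → SitForm
  | .clockCmp c op r => .clockCmp c op (r - d)
  | .and α β => .and (RstepT d α) (RstepT d β)
  | .not α => .not (RstepT d α)
  | .all s body => .all s fun n => RstepT d (body n)
  | α => α

/-- One regression step through an action `p`: a fluent atom is replaced by
the (instantiated) right-hand side of its successor state axiom, and a clock
comparison `c ⋈ r` becomes
`(R[Reset(c)] ∧ 0 ⋈ r) ∨ (¬ R[Reset(c)] ∧ c ⋈ r)`. -/
def RstepA (B : BAT) (p : ℕ) : SitForm → SitForm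
  | .pred (.fl i) args => B.ssaP (.fl i) (.name (Name.mk .act p)) args
  | .pred .reset args => B.ssaP .reset (.name (Name.mk .act p)) args
  | .pred P args => .pred P args
  | .eq t₁ t₂ => .eq t₁ t₂
  | .clockCmp c op r =>
      SitForm.orS
        (.and (B.ssaP .reset (.name (Name.mk .act p)) (.cons c .nil)) (.constCmp 0 op r))
        (.and (.not (B.ssaP .reset (.name (Name.mk .act p)) (.cons c .nil)))
          (.clockCmp c op r))
  | .constCmp r op r' => .constCmp r op r'
  | .and α β => .and (RstepA B p α) (RstepA B p β)
  | .not α => .not (RstepA B p α)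
  | .all s body => .all s fun n => RstepA B p (body n)
  | α => α

/-- Regression over the empty trace: clock comparisons `c ⋈ r` become
`0 ⋈ r` (all clocks are initialized to `0`); everything else is unchanged. -/
def Rinit : SitForm → SitForm
  | .clockCmp _ op r => .constCmp 0 op r
  | .and α β => .and (Rinit α) (Rinit β)
  | .not α => .not (Rinit α)
  | .all s body => .all s fun n => Rinit (body n)
  | α => α

/-- Regression through a (reversed) rational trace: each pair `(t, p)` is
regressed by first regressing through the action `p` and then through the
time increment `t - time(z)`. -/
def RcoreRev (B : BAT) : RatTrace → SitForm → SitForm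
  | [], α => Rinit α
  | (t, p) :: zr, α =>
      RcoreRev B zr (RstepT (t - ((zr.head?.map Prod.fst).getD 0)) (RstepA B p α))

/-- The regression operator `R[z, α]` for a static formula `α` and a rational
trace `z`. -/
def Regress (B : BAT) (z : RatTrace) (α : SitForm) : SitForm :=
  RcoreRev B z.reverse (unfoldPG B α)
/-! ### Finite-domain basic action theories -/

def bigOr : List SitForm → SitForm := fun l => l.foldr SitForm.orS falseSit

/-- A finite-domain BAT: a BAT together with finite domains of object, action
and clock standard names, and rigid type predicates `τ_o`, `τ_a`, `τ_c`. -/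
structure FDBAT extends BAT where
  Dobj : Finset ℕ
  Dact : Finset ℕ
  Dclk : Finset ℕ
  tauO : ℕ
  tauA : ℕ
  tauC : ℕ

def FDBAT.dom (B : FDBAT) : Sort3 → Finset ℕ
  | .obj => B.Dobj
  | .act => B.Dact
  | .clk => B.Dclk

def FDBAT.tau (B : FDBAT) : Sort3 → ℕ
  | .obj => B.tauO
  | .act => B.tauA
  | .clk => B.tauC

def tauAtom (tau : Sort3 → ℕ) (s : Sort3) (n : Name) : SitForm :=
  .pred (.rg (tau s)) (.cons (.name n) .nil)

/-- The domain closure axiom `∀x. τ(x) ≡ (x = n₁ ∨ … ∨ x = n_k)`. -/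
noncomputable def FDBAT.closureAx (B : FDBAT) (s : Sort3) : SitForm :=
  .all s fun x =>
    SitForm.iffS (tauAtom B.tau s x)
      (bigOr ((B.dom s).toList.map fun k => .eq (.name x) (.name (Name.mk s k))))

/-! Relativized formulas: every universal quantifier occurs in the form
`∀x. τ(x) ⊃ φ(x)`. -/

mutual
  inductive RelS (tau : Sort3 → ℕ) : SitForm → Prop
    | pred {P args} : RelS tau (.pred P args)
    | eq {t₁ t₂} : RelS tau (.eq t₁ t₂)
    | clockCmp {c op r} : RelS tau (.clockCmp c op r)
    | constCmp {r op r'} : RelS tau (.constCmp r op r')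
    | and {α β} : RelS tau α → RelS tau β → RelS tau (.and α β)
    | not {α} : RelS tau α → RelS tau (.not α)
    | all {s body} (ψ : Name → SitForm) :
        (∀ n, body n = SitForm.impS (tauAtom tau s n) (ψ n)) →
        (∀ n, RelS tau (ψ n)) → RelS tau (.all s body)
    | box {α} : RelS tau α → RelS tau (.box α)
    | after {δ α} : RelP tau δ → RelS tau α → RelS tau (.after δ α)
    | during {δ φ} : RelP tau δ → RelT tau φ → RelS tau (.during δ φ)
    | duringFin {δ φ} : RelP tau δ → RelT tau φ → RelS tau (.duringFin δ φ)
  inductive RelT (tau : Sort3 → ℕ) : TraceForm → Prop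
    | base {α} : RelS tau α → RelT tau (.base α)
    | and {φ ψ} : RelT tau φ → RelT tau ψ → RelT tau (.and φ ψ)
    | not {φ} : RelT tau φ → RelT tau (.not φ)
    | all {s body} (ψ : Name → TraceForm) :
        (∀ n, body n = TraceForm.not (.and (.base (tauAtom tau s n)) (.not (ψ n)))) →
        (∀ n, RelT tau (ψ n)) → RelT tau (.all s body)
    | untl {I φ ψ} : RelT tau φ → RelT tau ψ → RelT tau (.untl I φ ψ)
  inductive RelP (tau : Sort3 → ℕ) : Prog → Prop
    | act {t} : RelP tau (.act t)
    | test {α} : RelS tau α → RelP tau (.test α)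
    | seq {δ₁ δ₂} : RelP tau δ₁ → RelP tau δ₂ → RelP tau (.seq δ₁ δ₂)
    | choice {δ₁ δ₂} : RelP tau δ₁ → RelP tau δ₂ → RelP tau (.choice δ₁ δ₂)
    | conc {δ₁ δ₂} : RelP tau δ₁ → RelP tau δ₂ → RelP tau (.conc δ₁ δ₂)
    | star {δ} : RelP tau δ → RelP tau (.star δ)
end

/-- Well-formedness of a finite-domain BAT: `Σ₀` contains the three domain
closure axioms and, apart from these, every universal quantifier in `Σ` is
relativized to one of the type predicates. -/
def FDBAT.FDWF (B : FDBAT) : Prop :=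
  (∀ s : Sort3, B.closureAx s ∈ B.init) ∧
  (∀ α ∈ B.init, (∀ s : Sort3, α ≠ B.closureAx s) → RelS B.tau α) ∧
  (∀ t, RelS B.tau (B.pre t)) ∧
  (∀ t, RelS B.tau (B.gcA t)) ∧
  (∀ P a xs, RelS B.tau (B.ssaP P a xs)) ∧
  (∀ f a xs y, RelS B.tau (B.ssaF f a xs y))

/-- `w ≡_F w'`: the two worlds agree on the initial values of all fluents of
the finite-domain BAT on all arguments from the domain. -/
def EquivF (B : FDBAT) (w w' : World) : Prop :=
  (∀ P ∈ B.Frel, ∀ args : List Name,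
      (∀ n ∈ args, n.id ∈ B.dom n.sort) → w.pval P args [] = w'.pval P args []) ∧
  (∀ f ∈ B.Ffun, ∀ args : List Name,
      (∀ n ∈ args, n.id ∈ B.dom n.sort) → w.fval f args [] = w'.fval f args [])

/-! ### Metric temporal logic (MTL), pointwise semantics over timed words -/

/-- MTL formulas; atomic propositions are identified with nullary fluents. -/
inductive MTL : Type
  | atom (p : ℕ)
  | mnot (φ : MTL)
  | mand (φ ψ : MTL)
  | muntil (I : Ival) (φ ψ : MTL)

/-- The t-ESG trace formula corresponding to an MTL formula. -/
def MTL.toTrace : MTL → TraceForm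
  | .atom p => .base (.pred (.fl p) .nil)
  | .mnot φ => .not φ.toTrace
  | .mand φ ψ => .and φ.toTrace ψ.toTrace
  | .muntil I φ ψ => .untl I φ.toTrace ψ.toTrace

/-- A (finite or infinite) timed word: position `i` carries a set of atomic
propositions and a time point (`none` marks positions past the end of a
finite word). -/
abbrev TWord := ℕ → Option (Set ℕ × ℝ)

structure TWordWF (ρ : TWord) : Prop where
  init : ∃ s, ρ 0 = some (s, 0)
  closed : ∀ i, ρ (i + 1) ≠ none → ρ i ≠ none
  mono : ∀ i s t s' t', ρ i = some (s, t) → ρ (i + 1) = some (s', t') → t ≤ t'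

/-- Pointwise MTL semantics: `ρ, i ⊨ φ`. -/
def MTLSat (ρ : TWord) : ℕ → MTL → Prop
  | i, .atom p => ∃ s t, ρ i = some (s, t) ∧ p ∈ s
  | i, .mnot φ => ¬ MTLSat ρ i φ
  | i, .mand φ ψ => MTLSat ρ i φ ∧ MTLSat ρ i ψ
  | i, .muntil I φ ψ =>
      ∃ (j : ℕ) (si : Set ℕ) (ti : ℝ) (sj : Set ℕ) (tj : ℝ),
        i < j ∧ ρ i = some (si, ti) ∧ ρ j = some (sj, tj) ∧
        MTLSat ρ j ψ ∧ I.memR (tj - ti) ∧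
        ∀ m, i < m → m < j → MTLSat ρ m φ

/-- Validity in MTL (pointwise semantics over timed words). -/
def MTLValid (φ : MTL) : Prop := ∀ ρ : TWord, TWordWF ρ → MTLSat ρ 0 φ

/-- The timed word corresponding to a pair `(w, τ)` of a t-ESG world and a
timed trace: position `i` carries the set of (nullary) primitive formulas true
in `w` after the prefix of `τ` of length `i`, together with its time point. -/
def wordOf (w : World) (τ : TTrace) : TWord := fun i =>
  match τ with
  | .fin z =>
      if i ≤ z.length then
        some ({p : ℕ | w.pval (.fl p) [] (z.take i) = true}, lastTime (z.take i))
      else none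
  | .inf π =>
      some ({p : ℕ | w.pval (.fl p) [] (prefixTr π i) = true}, lastTime (prefixTr π i))
/-! ### Auxiliary lemmas for the proof -/

theorem aux_prefixTr_length (π : ℕ → ℝ × ℕ) (n : ℕ) : (prefixTr π n).length = n := by
  simp [prefixTr]

theorem aux_prefixTr_succ (π : ℕ → ℝ × ℕ) (n : ℕ) :
    prefixTr π (n + 1) = prefixTr π n ++ [π n] := by
  simp [prefixTr, List.range_succ]

theorem aux_prefixTr_add (π : ℕ → ℝ × ℕ) (n k : ℕ) :
    prefixTr π n ++ prefixTr (fun i => π (i + n)) k = prefixTr π (n + k) := by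
  induction k with
  | zero => simp [prefixTr]
  | succ k ih =>
    rw [aux_prefixTr_succ, ← List.append_assoc, ih, ← Nat.add_assoc, aux_prefixTr_succ,
      Nat.add_comm n k]

theorem aux_prefixTr_take (π : ℕ → ℝ × ℕ) (n i : ℕ) (h : i ≤ n) :
    (prefixTr π n).take i = prefixTr π i := by
  obtain ⟨k, rfl⟩ := Nat.exists_eq_add_of_le h
  rw [← aux_prefixTr_add]
  exact List.take_left' (aux_prefixTr_length π i)

theorem aux_lastTime_append (z : FinTrace) (t : ℝ) (p : ℕ) :
    lastTime (z ++ [(t, p)]) = t := by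
  simp [lastTime]

theorem aux_take_succ (z : FinTrace) (i : ℕ) (h : i < z.length) :
    lastTime (z.take (i + 1)) = z[i].1 := by
  rw [List.take_succ_eq_append_getElem h]
  exact aux_lastTime_append _ _ z[i].2

theorem aux_takeFin_add (τ : TTrace) (i k : ℕ) :
    τ.takeFin i ++ (τ.drop i).takeFin k = τ.takeFin (i + k) := by
  cases τ with
  | fin z => simp [TTrace.takeFin, TTrace.drop, List.take_add]
  | inf π => exact aux_prefixTr_add π i k

theorem aux_drop_drop (τ : TTrace) (i k : ℕ) : (τ.drop i).drop k = τ.drop (i + k) := by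
  cases τ with
  | fin z => simp [TTrace.drop, List.drop_drop]
  | inf π =>
    simp only [TTrace.drop]
    congr 1
    funext j
    congr 1
    omega

theorem aux_len_drop (τ : TTrace) (i k : ℕ) (h : (i : ℕ∞) ≤ τ.len) :
    (k : ℕ∞) ≤ (τ.drop i).len ↔ ((i + k : ℕ) : ℕ∞) ≤ τ.len := by
  cases τ with
  | fin z =>
    simp only [TTrace.len, TTrace.drop, List.length_drop, Nat.cast_le] at h ⊢
    omega
  | inf π => simp [TTrace.len, TTrace.drop]

theorem aux_wordOf_some (w : World) (τ : TTrace) (i : ℕ) (h : (i : ℕ∞) ≤ τ.len) :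
    wordOf w τ i = some ({p : ℕ | w.pval (.fl p) [] (τ.takeFin i) = true},
      lastTime (τ.takeFin i)) := by
  cases τ with
  | fin z =>
    simp only [TTrace.len, Nat.cast_le] at h
    simp [wordOf, TTrace.takeFin, h]
  | inf π => rfl

theorem aux_wordOf_len (w : World) (τ : TTrace) (i : ℕ) (h : wordOf w τ i ≠ none) :
    (i : ℕ∞) ≤ τ.len := by
  cases τ with
  | fin z =>
    simp only [TTrace.len, Nat.cast_le]
    by_contra hc
    exact h (by simp [wordOf, hc])
  | inf π => simp [TTrace.len]

/-- Truth in t-ESG after the `i`-th prefix is MTL truth at position `i`. -/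
theorem aux_sat_iff (w : World) (τ : TTrace) (φ : MTL) : ∀ i : ℕ, (i : ℕ∞) ≤ τ.len →
    (SatT w (τ.takeFin i) (τ.drop i) φ.toTrace ↔ MTLSat (wordOf w τ) i φ) := by
  induction φ with
  | atom p =>
    intro i hi
    simp [MTL.toTrace, SatT, SatS, denotArgs, MTLSat, aux_wordOf_some w τ i hi]
  | mnot φ ih =>
    intro i hi
    simp only [MTL.toTrace, SatT, MTLSat, ih i hi]
  | mand φ ψ ih₁ ih₂ =>
    intro i hi
    simp only [MTL.toTrace, SatT, MTLSat, ih₁ i hi, ih₂ i hi]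
  | muntil I φ ψ ih₁ ih₂ =>
    intro i hi
    simp only [MTL.toTrace, SatT, MTLSat, aux_takeFin_add, aux_drop_drop]
    constructor
    · rintro ⟨k, hk, hlen, hψ, hI, hφ⟩
      rw [aux_len_drop τ i k hi] at hlen
      refine ⟨i + k, _, _, _, _, by omega, aux_wordOf_some w τ i hi,
        aux_wordOf_some w τ (i + k) hlen, (ih₂ _ hlen).1 hψ, hI, ?_⟩
      intro m hm hmk
      obtain ⟨d, rfl⟩ := Nat.exists_eq_add_of_lt hm
      have hlm : ((i + (d + 1) : ℕ) : ℕ∞) ≤ τ.len :=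
        le_trans (Nat.cast_le.2 (by omega)) hlen
      exact (ih₁ _ hlm).1 (hφ (d + 1) (by omega) (by omega))
    · rintro ⟨j, si, ti, sj, tj, hij, hsi, hsj, hψ, hI, hφ⟩
      have hj : (j : ℕ∞) ≤ τ.len := aux_wordOf_len w τ j (by simp [hsj])
      obtain ⟨d, rfl⟩ := Nat.exists_eq_add_of_lt hij
      rw [aux_wordOf_some w τ i hi] at hsi
      rw [aux_wordOf_some w τ _ hj] at hsj
      simp only [Option.some.injEq, Prod.mk.injEq] at hsi hsj
      obtain ⟨-, rfl⟩ := hsi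
      obtain ⟨-, rfl⟩ := hsj
      refine ⟨d + 1, by omega, (aux_len_drop τ i _ hi).2 hj, (ih₂ _ hj).2 hψ, hI, ?_⟩
      intro m hm hmk
      have hlm : ((i + m : ℕ) : ℕ∞) ≤ τ.len := le_trans (Nat.cast_le.2 (by omega)) hj
      exact (ih₁ _ hlm).2 (hφ _ (by omega) (by omega))

theorem aux_lastTime_mono (τ : TTrace) (h : τ.WF) (i : ℕ) (hi : ((i + 1 : ℕ) : ℕ∞) ≤ τ.len) :
    lastTime (τ.takeFin i) ≤ lastTime (τ.takeFin (i + 1)) := by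
  cases τ with
  | fin z =>
    simp only [TTrace.len, Nat.cast_le] at hi
    have hc : List.IsChain (· ≤ ·) ((0 : ℝ) :: z.map Prod.fst) := h
    rw [List.isChain_iff_getElem] at hc
    have hci := hc i (by simp; omega)
    simp only [TTrace.takeFin]
    rw [aux_take_succ z i (by omega)]
    cases i with
    | zero => simpa [lastTime] using hci
    | succ i =>
      rw [aux_take_succ z i (by omega)]
      simpa using hci
  | inf π =>
    obtain ⟨h0, hm⟩ := h
    simp only [TTrace.takeFin]
    rw [aux_prefixTr_succ, aux_lastTime_append _ (π i).1 (π i).2]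
    cases i with
    | zero => simpa [lastTime, prefixTr] using h0 0
    | succ i =>
      rw [aux_prefixTr_succ, aux_lastTime_append _ (π i).1 (π i).2]
      exact hm _ _ (by omega)

theorem aux_wordOf_WF (w : World) (τ : TTrace) (h : τ.WF) : TWordWF (wordOf w τ) where
  init := by
    have : lastTime (τ.takeFin 0) = 0 := by
      cases τ <;> simp [TTrace.takeFin, lastTime, prefixTr]
    have h0 := aux_wordOf_some w τ 0 (by simp)
    rw [this] at h0
    exact ⟨_, h0⟩
  closed := by
    intro i hi
    have := aux_wordOf_len w τ _ hi
    rw [aux_wordOf_some w τ i (le_trans (Nat.cast_le.2 (by omega)) this)]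
    simp
  mono := by
    intro i s t s' t' h1 h2
    have hl := aux_wordOf_len w τ (i + 1) (by simp [h2])
    rw [aux_wordOf_some w τ i (le_trans (Nat.cast_le.2 (by omega)) hl)] at h1
    rw [aux_wordOf_some w τ _ hl] at h2
    simp only [Option.some.injEq, Prod.mk.injEq] at h1 h2
    rw [← h1.2, ← h2.2]
    exact aux_lastTime_mono τ h i hl

theorem aux_countable_Name : Countable Name := by
  have hs : Countable Sort3 :=
    Function.Injective.countable (f := fun s : Sort3 => (match s with
      | .obj => 0 | .act => 1 | .clk => 2 : ℕ))
      (by intro a b; cases a <;> cases b <;> simp)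
  exact Function.Injective.countable (f := fun n : Name => (n.sort, n.id))
    (by rintro ⟨a, b⟩ ⟨c, d⟩ h; simpa using h)

theorem aux_countable_FuncSym : Countable FuncSym := by
  have := aux_countable_Name
  exact Function.Injective.countable
    (f := fun f : FuncSym => ((Name.mk f.sort f.id), f.fluent))
    (by
      rintro ⟨a, b, c⟩ ⟨d, e, f⟩ h
      simp only [Prod.mk.injEq, Name.mk.injEq] at h
      simp [h])

theorem aux_code : ∃ c : FuncSym × List Name → ℕ, Function.Injective c := by
  have := aux_countable_Name
  have := aux_countable_FuncSym
  exact Countable.exists_injective_nat _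

open Classical in
/-- A world whose nullary fluents after a trace of length `i` are those of `S i`. -/
noncomputable def auxWorld (S : ℕ → Set ℕ) : World where
  fval f args _ := ⟨f.sort, aux_code.choose (f, args)⟩
  pval P _ z := match P with
    | .fl p => decide (p ∈ S z.length)
    | _ => false
  cval _ z := lastTime z
  fval_sort _ _ _ := rfl
  rigid_fun _ _ _ _ _ := rfl
  rigid_pred P hP _ _ _ := by cases P <;> simp_all [PredSym.isFluent]
  unique_names f f' args args' z z' _ _ hne h := by
    simp only [Name.mk.injEq] at h
    exact hne (aux_code.choose_spec h.2)
  clock_init _ := by simp [lastTime]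
  clock_prog c z t p _ := by simp [aux_lastTime_append]

theorem auxWorld_fl (S : ℕ → Set ℕ) (p : ℕ) (z : FinTrace) :
    (auxWorld S).pval (.fl p) [] z = true ↔ p ∈ S z.length := by
  simp [auxWorld]

/-- Every timed word is the word of some world and some trace. -/
theorem aux_realize (ρ : TWord) (h : TWordWF ρ) :
    ∃ (w : World) (τ : TTrace), τ.WF ∧ wordOf w τ = ρ := by
  obtain ⟨s0, h0⟩ := h.init
  let S : ℕ → Set ℕ := fun i => ((ρ i).map Prod.fst).getD ∅
  let T : ℕ → ℝ := fun i => ((ρ i).map Prod.snd).getD 0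
  let π : ℕ → ℝ × ℕ := fun i => (T (i + 1), 0)
  have hT0 : T 0 = 0 := by simp [T, h0]
  have hlast : ∀ i, lastTime (prefixTr π i) = T i := by
    intro i
    cases i with
    | zero => simp [hT0, prefixTr, lastTime]
    | succ i => rw [aux_prefixTr_succ]; exact aux_lastTime_append _ _ _
  have hset : ∀ i, {p : ℕ | (auxWorld S).pval (.fl p) [] (prefixTr π i) = true} = S i := by
    intro i
    ext p
    rw [Set.mem_setOf_eq, auxWorld_fl, aux_prefixTr_length]
  have hsome : ∀ i, ρ i ≠ none → some (S i, T i) = ρ i := by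
    intro i hi
    obtain ⟨x, hx⟩ := Option.ne_none_iff_exists'.1 hi
    simp [S, T, hx]
  have hmono : ∀ i, ρ (i + 1) ≠ none → T i ≤ T (i + 1) := fun i hi =>
    h.mono i _ _ _ _ (hsome i (h.closed i hi)).symm (hsome _ hi).symm
  by_cases hinf : ∀ i, ρ i ≠ none
  · refine ⟨auxWorld S, .inf π, ?_, ?_⟩
    · have hm : Monotone T := monotone_nat_of_le_succ fun i => hmono i (hinf _)
      exact ⟨fun i => hT0 ▸ hm (Nat.zero_le (i + 1)), fun i j hij => hm (by omega)⟩
    · funext i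
      simp only [wordOf, hset, hlast]
      exact hsome i (hinf i)
  · push Not at hinf
    classical
    let N := Nat.find hinf
    have hN : ρ N = none := Nat.find_spec hinf
    have hlt : ∀ i, i < N → ρ i ≠ none := fun i hi => Nat.find_min hinf hi
    have hNpos : N ≠ 0 := by
      intro hz
      rw [hz, h0] at hN
      simp at hN
    obtain ⟨n, hn⟩ := Nat.exists_eq_succ_of_ne_zero hNpos
    have hge : ∀ k, ρ (N + k) = none := by
      intro k
      induction k with
      | zero => exact hN
      | succ k ih =>
        by_contra hc
        exact h.closed (N + k) hc ih
    refine ⟨auxWorld S, .fin (prefixTr π n), ?_, ?_⟩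
    · change List.IsChain (· ≤ ·) ((0 : ℝ) :: (prefixTr π n).map Prod.fst)
      rw [List.isChain_iff_getElem]
      intro i hi
      simp only [List.length_cons, List.length_map, aux_prefixTr_length] at hi
      have hm := hmono i (hlt _ (by omega))
      cases i with
      | zero => simpa [prefixTr, π, hT0] using hm
      | succ i => simpa [prefixTr, π] using hm
    · funext i
      simp only [wordOf, aux_prefixTr_length]
      split_ifs with hi
      · rw [aux_prefixTr_take π n i hi, hset, hlast]
        exact hsome i (hlt i (by omega))
      · obtain ⟨k, hk⟩ := Nat.exists_eq_add_of_le (show N ≤ i by omega)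
        rw [hk, hge]

/-- For every MTL sentence `φ` (over atomic propositions
identified with nullary fluents): `φ` is valid in MTL (pointwise semantics
over timed words) if and only if `φ` is valid as a trace formula in t-ESG
(i.e. `w, ⟨⟩, τ ⊨ φ` for every t-ESG world `w` and every trace `τ`). -/
theorem mtl_tesg_validity_equivalence (φ : MTL) :
    MTLValid φ ↔ ∀ (w : World) (τ : TTrace), τ.WF → SatT w [] τ φ.toTrace := by
  constructor
  · intro hv w τ hτ
    have := (aux_sat_iff w τ φ 0 (by simp)).2 (hv _ (aux_wordOf_WF w τ hτ))
    cases τ with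
    | fin z => simpa [TTrace.takeFin, TTrace.drop] using this
    | inf π => simpa [TTrace.takeFin, TTrace.drop, prefixTr] using this
  · intro hv ρ hρ
    obtain ⟨w, τ, hτ, rfl⟩ := aux_realize ρ hρ
    refine (aux_sat_iff w τ φ 0 (by simp)).1 ?_
    have := hv w τ hτ
    cases τ with
    | fin z => simpa [TTrace.takeFin, TTrace.drop] using this
    | inf π => simpa [TTrace.takeFin, TTrace.drop, prefixTr] using this

end TESG
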